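/- arXiv:1604.04682 — 4 statements merged into one kernel-verified Lean document; each statement's English description precedes it below -/
import Mathlib

section
/- For every commutative ring R, every a ∈ R, and every natural number n, the n-th Dickson polynomial of the third kind F_n(x,a) (defined by F_0 = 0, F_1 = x, and F_{m+2} = x·F_{m+1} − a·F_m) satisfies the polynomial identity (x² − 4a)·F_n''(x,a) + 3x·F_n'(x,a) − n²·F_n(x,a) = 2n·D_n(x,a), where D_n(x,a) is the n-th Dickson polynomial of the first kind (defined by D_0 = 2, D_1 = x, D_{m+2} = x·D_{m+1} − a·D_m) and primes denote formal polynomial derivatives. -/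
open Polynomial

/-!
All kinds obey one linear recurrence, so each is expressed through the second kind
`E m = dickson 2 a m`: `F (m + 1) = X * E m` and `D (m + 1) = 2 * E (m + 1) - X * E m`.
Differentiating `(X ^ 2 - 4 * a) * (E m)' = (m + 1) * D (m + 1) - X * E m` and using
`(D (m + 1))' = (m + 1) * E m` gives a homogeneous equation for `E m`. When `X * E m` is substituted
into the differential operator, the terms that this equation does not cancel are
`2 * (X ^ 2 - 4 * a) * (E m)' + 2 * X * E m`, i.e. the right-hand side `2 * (m + 1) * D (m + 1)`.
-/

section

variable {R : Type*} [CommRing R] (a : R)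

theorem dickson_succ_eq_dickson_two (k : ℕ) : ∀ n : ℕ,
    dickson k a (n + 1) =
      (k - 2 : R[X]) * X * dickson 2 a n + (3 - k : R[X]) * dickson 2 a (n + 1)
  | 0 => by
    simp only [dickson_zero, dickson_one, zero_add]
    push_cast
    ring
  | 1 => by
    simp only [Nat.reduceAdd, dickson_one, dickson_two]
    push_cast
    ring
  | n + 2 => by
    rw [dickson_add_two, dickson_succ_eq_dickson_two k (n + 1), dickson_succ_eq_dickson_two k n]
    simp only [dickson_add_two]
    ring

theorem dickson_three_succ (n : ℕ) : dickson 3 a (n + 1) = X * dickson 2 a n := by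
  rw [dickson_succ_eq_dickson_two]
  push_cast
  ring

theorem dickson_one_succ (n : ℕ) :
    dickson 1 a (n + 1) = 2 * dickson 2 a (n + 1) - X * dickson 2 a n := by
  rw [dickson_succ_eq_dickson_two]
  push_cast
  ring

theorem derivative_dickson_one_succ : ∀ n : ℕ,
    derivative (dickson 1 a (n + 1)) = (n + 1 : R[X]) * dickson 2 a n
  | 0 => by
    simp only [dickson_zero, dickson_one, zero_add, derivative_X]
    push_cast
    ring
  | 1 => by
    simp only [Nat.reduceAdd, dickson_one, dickson_two, derivative_sub, derivative_X_sq,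
      derivative_C_mul, derivative_ofNat, derivative_natCast, map_ofNat]
    push_cast
    ring
  | n + 2 => by
    rw [dickson_add_two, derivative_sub, derivative_mul, derivative_X, derivative_C_mul,
      derivative_dickson_one_succ (n + 1), derivative_dickson_one_succ n, dickson_one_succ,
      dickson_add_two 2]
    push_cast
    ring

theorem X_sq_sub_C_mul_derivative_dickson_two : ∀ n : ℕ,
    (X ^ 2 - C (4 * a)) * derivative (dickson 2 a n) =
      (n + 1 : R[X]) * dickson 1 a (n + 1) - X * dickson 2 a n
  | 0 => by
    simp only [dickson_zero, dickson_one, zero_add, derivative_sub, derivative_ofNat,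
      derivative_natCast]
    push_cast
    ring
  | 1 => by
    simp only [Nat.reduceAdd, dickson_one, dickson_two, derivative_X, C_mul, map_ofNat]
    push_cast
    ring
  | n + 2 => by
    have ih₀ := X_sq_sub_C_mul_derivative_dickson_two n
    have ih₁ := X_sq_sub_C_mul_derivative_dickson_two (n + 1)
    rw [dickson_one_succ] at ih₀ ih₁ ⊢
    simp only [dickson_add_two, derivative_sub, derivative_mul, derivative_X, derivative_C, C_mul,
      map_ofNat] at ih₀ ih₁ ⊢
    push_cast at ih₁ ⊢
    linear_combination X * ih₁ - C a * ih₀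

theorem dickson_second_kind_ode (n : ℕ) :
    (X ^ 2 - C (4 * a)) * derivative (derivative (dickson 2 a n))
      + 3 * X * derivative (dickson 2 a n)
      - (n * (n + 2) : R[X]) * dickson 2 a n
    = 0 := by
  have h := congrArg derivative (X_sq_sub_C_mul_derivative_dickson_two a n)
  simp only [derivative_mul, derivative_sub, derivative_add, derivative_X_sq, derivative_C,
    derivative_X, derivative_natCast, derivative_one, derivative_dickson_one_succ,
    map_ofNat] at h
  linear_combination h

end

/-- The Dickson polynomials of the third kind `F n = dickson 3 a n` satisfy the
non-homogeneous second-order differential identity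
`(x² − 4a)·F_n'' + 3x·F_n' − n²·F_n = 2n·D_n`, where `D n = dickson 1 a n` is the
Dickson polynomial of the first kind. -/
theorem dickson_third_kind_ode (R : Type*) [CommRing R] (a : R) (n : ℕ) :
    (X ^ 2 - C (4 * a)) * derivative (derivative (dickson 3 a n))
      + 3 * X * derivative (dickson 3 a n)
      - (n : R[X]) ^ 2 * dickson 3 a n
    = 2 * (n : R[X]) * dickson 1 a n := by
  cases n with
  | zero => simp
  | succ m =>
    have hE := dickson_second_kind_ode a m
    have hE' := X_sq_sub_C_mul_derivative_dickson_two a m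
    simp only [dickson_three_succ, derivative_mul, derivative_X, derivative_add, derivative_one]
    push_cast
    linear_combination X * hE + 2 * hE'
end

section
/- Let a be a nonzero complex number, n a natural number, and p ∈ ℂ[x] a polynomial satisfying (x² − 4a)·p'' + 3x·p' − n²·p = 2n·D_n(x,a), where D_n(x,a) is the n-th Dickson polynomial of the first kind. Then for every natural number k such that n − k is odd, the coefficients b_j of p satisfy the recurrence b_{k+2} = −(n² − k(k+2))/(4a(k+2)(k+1))·b_k. -/
open Polynomial

/-!
The Euler operator `θ p = X * p'` multiplies the `k`-th coefficient by `k`, and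
`X ^ 2 * p'' = θ (θ p) - θ p`. Comparing coefficients of `X ^ k` in the differential equation
therefore relates only `b_k`, `b_{k+2}` and the `k`-th coefficient of the right-hand side, which
vanishes because `D_n` has the parity of `n`.
-/

section Semiring

variable {R : Type*} [Semiring R]

theorem coeff_X_mul_derivative (p : R[X]) (k : ℕ) :
    (X * derivative p).coeff k = k * p.coeff k := by
  cases k with
  | zero => simp
  | succ k => rw [coeff_X_mul, coeff_derivative, ← Nat.cast_succ, (Nat.cast_commute _ _).eq]

theorem X_mul_derivative_X_mul_derivative (p : R[X]) :
    X * derivative (X * derivative p) = X * derivative p + X ^ 2 * derivative (derivative p) := by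
  rw [derivative_mul, derivative_X, one_mul, mul_add, ← mul_assoc, sq]

end Semiring

section CommRing

variable {R : Type*} [CommRing R]

theorem coeff_X_sq_sub_C_mul_derivative_derivative (c : R) (p : R[X]) (k : ℕ) :
    ((X ^ 2 - C c) * derivative (derivative p)).coeff k
      = k * (k - 1) * p.coeff k - c * (k + 2) * (k + 1) * p.coeff (k + 2) := by
  have hX : X ^ 2 * derivative (derivative p)
      = X * derivative (X * derivative p) - X * derivative p :=
    eq_sub_of_add_eq' (X_mul_derivative_X_mul_derivative p).symm
  rw [sub_mul, hX]
  simp only [coeff_sub, coeff_C_mul, coeff_X_mul_derivative, coeff_derivative]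
  push_cast
  ring

theorem coeff_dickson_of_odd_add (κ : ℕ) (a : R) :
    ∀ n k : ℕ, Odd (n + k) → (dickson κ a n).coeff k = 0
  | 0, k, h => by
    have hk : k ≠ 0 := by rintro rfl; simp at h
    have hC : dickson κ a 0 = C (3 - κ : R) := by
      rw [dickson_zero, map_sub, map_natCast, map_ofNat C 3]
    rw [hC, coeff_C_of_ne_zero hk]
  | 1, k, h => by
    have hk : 1 ≠ k := by rintro rfl; exact absurd h (by decide)
    rw [dickson_one, coeff_X, if_neg hk]
  | n + 2, 0, h => by
    rw [dickson_add_two, coeff_sub, mul_coeff_zero, coeff_X_zero, coeff_C_mul,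
      coeff_dickson_of_odd_add κ a n _ (by grind), zero_mul, mul_zero, sub_zero]
  | n + 2, k + 1, h => by
    rw [dickson_add_two, coeff_sub, coeff_X_mul, coeff_C_mul,
      coeff_dickson_of_odd_add κ a (n + 1) k (by grind),
      coeff_dickson_of_odd_add κ a n _ (by grind), mul_zero, sub_zero]

theorem dickson_particular_coeff_odd_general (κ : ℕ) (a : R) (n : ℕ) (p : R[X])
    (hp : (X ^ 2 - C (4 * a)) * derivative (derivative p) + 3 * X * derivative p
        - (n : R[X]) ^ 2 * p = 2 * (n : R[X]) * dickson κ a n)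
    (k : ℕ) (hk : Odd (n + k)) :
    4 * a * (k + 2) * (k + 1) * p.coeff (k + 2) = -(n ^ 2 - k * (k + 2)) * p.coeff k := by
  have hrhs : (2 * (n : R[X]) * dickson κ a n).coeff k = 0 := by
    rw [mul_assoc, coeff_ofNat_mul, coeff_natCast_mul, coeff_dickson_of_odd_add κ a n k hk,
      mul_zero, mul_zero]
  have hcoeff : k * (k - 1) * p.coeff k - 4 * a * (k + 2) * (k + 1) * p.coeff (k + 2)
      + 3 * (k * p.coeff k) - n ^ 2 * p.coeff k = 0 := by
    rw [← hrhs, ← hp, coeff_sub, coeff_add, coeff_X_sq_sub_C_mul_derivative_derivative,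
      mul_assoc 3 X, coeff_ofNat_mul, coeff_X_mul_derivative, ← Nat.cast_pow (α := R[X]),
      coeff_natCast_mul, Nat.cast_pow]
  linear_combination -hcoeff

end CommRing

/-- If a polynomial `p` over `ℂ` satisfies the non-homogeneous Dickson differential
equation `(x² − 4a)p'' + 3xp' − n²p = 2n·D_n(x,a)` with `a ≠ 0`, then for every `k`
with `n − k` odd, the coefficients satisfy
`b_{k+2} = −(n² − k(k+2))/(4a(k+2)(k+1))·b_k`. -/
theorem dickson_particular_coeff_odd (a : ℂ) (ha : a ≠ 0) (n : ℕ) (p : ℂ[X])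
    (hp : (X ^ 2 - C (4 * a)) * derivative (derivative p) + 3 * X * derivative p
        - (n : ℂ[X]) ^ 2 * p = 2 * (n : ℂ[X]) * dickson 1 a n)
    (k : ℕ) (hk : Odd ((n : ℤ) - (k : ℤ))) :
    p.coeff (k + 2)
      = -(((n : ℂ) ^ 2 - (k : ℂ) * ((k : ℂ) + 2))
          / (4 * a * ((k : ℂ) + 2) * ((k : ℂ) + 1))) * p.coeff k := by
  have hden : 4 * a * ((k : ℂ) + 2) * ((k : ℂ) + 1) ≠ 0 :=
    mul_ne_zero (mul_ne_zero (mul_ne_zero (by norm_num) ha) (by norm_cast)) (by norm_cast)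
  rw [← neg_div, div_mul_eq_mul_div, eq_div_iff hden, mul_comm (p.coeff _)]
  exact dickson_particular_coeff_odd_general 1 a n p hp k (by grind)
end

section
/- For every a ∈ ℂ and every natural number n ≥ 1, the n-th Dickson polynomial of the first kind satisfies Waring's formula: D_n(x,a) = Σ_{i=0}^{⌊n/2⌋} (n/(n−i))·C(n−i, i)·(−a)^i·x^{n−2i}, where C(·,·) denotes the binomial coefficient and the scalar n/(n−i) is the complex number n divided by n−i. -/
open Polynomial

/-!
For `n ≥ 2` the Dickson polynomial `D_n` of the `k`-th kind is `E_n - (2 - k) a E_{n-2}`, where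
`E_n` is the one of the second kind. By Pascal's rule
`E_n = ∑_{i + j = n} C(j, i) (-a)^i x^{j-i}`, so the coefficient of `(-a)^i x^{j-i}` in `D_n` is
`C(j, i) + (2 - k) C(j - 1, i - 1)`. Absorption, `j C(j - 1, i - 1) = i C(j, i)`, turns this into
`(j + (2 - k) i) / j · C(j, i)`, whose numerator is `n` when `k = 1`.
-/

open Finset

theorem sum_antidiagonal_eq_sum_range_half {M : Type*} [AddCommMonoid M] {f : ℕ → ℕ → M}
    (hf : ∀ i j, j < i → f i j = 0) (n : ℕ) :
    ∑ p ∈ antidiagonal n, f p.1 p.2 = ∑ i ∈ range (n / 2 + 1), f i (n - i) := by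
  rw [Nat.sum_antidiagonal_eq_sum_range_succ]
  symm
  refine sum_subset (range_subset_range.2 (by lia)) fun i _ hi ↦ hf i (n - i) ?_
  rw [mem_range] at hi
  lia

theorem sum_antidiagonal_add_two {M : Type*} [AddCommMonoid M] (f : ℕ × ℕ → M) (n : ℕ) :
    ∑ p ∈ antidiagonal (n + 2), f p =
      f (0, n + 2) + (f (n + 2, 0) + ∑ p ∈ antidiagonal n, f (p.1 + 1, p.2 + 1)) := by
  rw [Nat.sum_antidiagonal_succ, Nat.sum_antidiagonal_succ']

theorem choose_succ_mul_pow_sub {R : Type*} [Semiring R] (x : R) (i j : ℕ) :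
    j.choose (i + 1) * x ^ (j - i) = x * (j.choose (i + 1) * x ^ (j - (i + 1))) := by
  rcases lt_or_ge i j with hij | hji
  · rw [← (Nat.cast_commute _ x).left_comm, ← pow_succ', show j - (i + 1) + 1 = j - i by lia]
  · simp [Nat.choose_eq_zero_of_lt (Nat.lt_succ_of_le hji)]

section CommRing

variable {R : Type*} [CommRing R]

theorem dickson_add_two_eq_dickson_two_sub (k : ℕ) (a : R) (n : ℕ) :
    dickson k a (n + 2) = dickson 2 a (n + 2) - C ((2 - k) * a) * dickson 2 a n := by
  induction n using Nat.twoStepInduction with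
  | zero =>
    rw [zero_add, dickson_two, dickson_two, dickson_zero]
    simp only [C_mul, C_sub, C_ofNat, C_eq_natCast, Nat.cast_ofNat]
    ring
  | one =>
    simp only [dickson_add_two, zero_add, dickson_one, dickson_zero, C_mul, C_sub, C_ofNat,
      C_eq_natCast, Nat.cast_ofNat]
    ring
  | more n ih₀ ih₁ =>
    rw [dickson_add_two k, ih₀, ih₁, dickson_add_two 2 a (n + 2), dickson_add_two 2 a n]
    ring

theorem dickson_two_eq_sum_antidiagonal (a : R) (n : ℕ) :
    dickson 2 a n =
      ∑ p ∈ antidiagonal n, C ((p.2.choose p.1 : R) * (-a) ^ p.1) * X ^ (p.2 - p.1) := by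
  induction n using Nat.twoStepInduction with
  | zero => norm_num
  | one => simp [Nat.antidiagonal_succ]
  | more n ih₀ ih₁ =>
    have pascal (i j : ℕ) :
        (C (((j + 1).choose (i + 1) : R) * (-a) ^ (i + 1)) * X ^ (j - i) : R[X]) =
          X * (C ((j.choose (i + 1) : R) * (-a) ^ (i + 1)) * X ^ (j - (i + 1))) -
            C a * (C ((j.choose i : R) * (-a) ^ i) * X ^ (j - i)) := by
      simp only [Nat.choose_succ_succ', Nat.cast_add, C_mul, C_add, C_pow, C_neg, C_eq_natCast]
      linear_combination (-C a) ^ (i + 1) * choose_succ_mul_pow_sub (X : R[X]) i j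
    rw [dickson_add_two, ih₀, ih₁, Nat.sum_antidiagonal_succ, sum_antidiagonal_add_two]
    simp only [Nat.add_sub_add_right, pascal, sum_sub_distrib, ← mul_sum]
    simp [mul_add, ← pow_succ', add_sub_assoc]

theorem dickson_add_two_eq_sum_antidiagonal (k : ℕ) (a : R) (n : ℕ) :
    dickson k a (n + 2) = X ^ (n + 2) + ∑ p ∈ antidiagonal n,
      C (((p.2 + 1).choose (p.1 + 1) + (2 - k) * p.2.choose p.1) * (-a) ^ (p.1 + 1)) *
        X ^ (p.2 - p.1) := by
  have second_kind : dickson 2 a (n + 2) = X ^ (n + 2) + ∑ p ∈ antidiagonal n,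
      C (((p.2 + 1).choose (p.1 + 1) : R) * (-a) ^ (p.1 + 1)) * X ^ (p.2 - p.1) := by
    rw [dickson_two_eq_sum_antidiagonal, sum_antidiagonal_add_two]
    simp
  rw [dickson_add_two_eq_dickson_two_sub, second_kind, dickson_two_eq_sum_antidiagonal, mul_sum,
    add_sub_assoc, ← sum_sub_distrib]
  refine congrArg _ (sum_congr rfl fun p _ ↦ ?_)
  simp only [C_mul, C_add, C_pow, C_neg]
  ring

end CommRing

section Field

variable {K : Type*} [Field K] [CharZero K]

theorem add_mul_div_mul_choose_succ_succ (c : K) (j i : ℕ) :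
    ((j + 1 : ℕ) + c * (i + 1 : ℕ)) / (j + 1 : ℕ) * ((j + 1).choose (i + 1) : K) =
      (j + 1).choose (i + 1) + c * j.choose i := by
  have absorption : ((j + 1 : ℕ) * j.choose i : K) = (j + 1).choose (i + 1) * (i + 1 : ℕ) :=
    mod_cast Nat.add_one_mul_choose_eq j i
  have hj : ((j + 1 : ℕ) : K) ≠ 0 := Nat.cast_ne_zero.2 j.succ_ne_zero
  field_simp
  linear_combination -c * absorption

theorem dickson_eq_sum_antidiagonal (k : ℕ) (a : K) {n : ℕ} (hn : 1 ≤ n) :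
    dickson k a n = ∑ p ∈ antidiagonal n,
      C ((p.2 + (2 - k) * p.1) / p.2 * p.2.choose p.1 * (-a) ^ p.1) * X ^ (p.2 - p.1) := by
  match n, hn with
  | 1, _ => simp [Nat.antidiagonal_succ]
  | n + 2, _ =>
    have hn₀ : ((n + 2 : ℕ) : K) ≠ 0 := Nat.cast_ne_zero.2 (by lia)
    rw [dickson_add_two_eq_sum_antidiagonal, sum_antidiagonal_add_two]
    simp only [Nat.add_sub_add_right, add_mul_div_mul_choose_succ_succ]
    simp [-Nat.cast_add, hn₀]

theorem dickson_first_kind_waring_general (k : ℕ) (a : K) {n : ℕ} (hn : 1 ≤ n) :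
    dickson k a n = ∑ i ∈ range (n / 2 + 1),
      C ((n - (k - 1) * i) / (n - i) * (n - i).choose i * (-a) ^ i) * X ^ (n - 2 * i) := by
  rw [dickson_eq_sum_antidiagonal k a hn, sum_antidiagonal_eq_sum_range_half
    (f := fun i j ↦ C ((j + (2 - k) * i) / j * j.choose i * (-a) ^ i) * X ^ (j - i))
    fun i j hji ↦ by simp [Nat.choose_eq_zero_of_lt hji]]
  refine sum_congr rfl fun i hi ↦ ?_
  have hin : i ≤ n := by rw [mem_range] at hi; lia
  have numerator : (n - i + (2 - k) * i : K) = n - (k - 1) * i := by ring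
  rw [Nat.sub_sub, ← two_mul, Nat.cast_sub hin, numerator]

end Field

/-- Waring's formula for the Dickson polynomials of the first kind over `ℂ`:
`D_n(x,a) = Σ_{i=0}^{⌊n/2⌋} (n/(n−i))·C(n−i,i)·(−a)^i·x^{n−2i}` for `n ≥ 1`. -/
theorem dickson_first_kind_waring (a : ℂ) (n : ℕ) (hn : 1 ≤ n) :
    dickson 1 a n
      = ∑ i ∈ Finset.range (n / 2 + 1),
          C ((n : ℂ) / ((n : ℂ) - (i : ℂ)) * ((n - i).choose i : ℂ) * (-a) ^ i)
            * X ^ (n - 2 * i) := by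
  simpa using dickson_first_kind_waring_general 1 a hn
end

section
/- For every a ∈ ℂ and every natural number n ≥ 1, the n-th Dickson polynomial of the third kind satisfies the explicit formula F_n(x,a) = Σ_{i=0}^{⌊n/2⌋} ((n−2i)/(n−i))·C(n−i, i)·(−a)^i·x^{n−2i}, where C(·,·) denotes the binomial coefficient and the scalar (n−2i)/(n−i) is computed in ℂ. -/
open Polynomial

/-!
The recursion is linear, so the Dickson polynomials of every kind `k` are combinations of those of
the second kind `E_n`: `dickson k a (n + 2) = E_{n+2} + (k - 2) a E_n`. For `E_n`, Pascal's rule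
gives `E_n = ∑ i, C(n-i, i) (-a)^i x^(n-2i)`. The absorption identity
`(i+1) C(m+1, i+1) = (m+1) C(m, i)` then merges the two sums, with coefficients
`(n - (k-1)i) / (n-i) C(n-i, i)`.
-/

section CommRing

open Finset.HasAntidiagonal (antidiagonal)

variable {R : Type*} [CommRing R] (a : R)

/-- The term of index `i` in the explicit formula for the Dickson polynomial of the second kind of
degree `i + j`. Indexing by `i` and `j` instead of `i` and the degree turns that formula into a sum
over an antidiagonal; the exponent is truncated only where the binomial coefficient vanishes. -/
noncomputable def secondKindTerm (i j : ℕ) : R[X] :=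
  C ((j.choose i : R) * (-a) ^ i) * X ^ (j - i)

lemma secondKindTerm_zero_left (j : ℕ) : secondKindTerm a 0 j = X ^ j := by
  simp [secondKindTerm]

lemma secondKindTerm_eq_zero_of_lt {i j : ℕ} (h : j < i) : secondKindTerm a i j = 0 := by
  simp [secondKindTerm, Nat.choose_eq_zero_of_lt h]

lemma secondKindTerm_succ_succ (i j : ℕ) :
    secondKindTerm a (i + 1) (j + 1) =
      X * secondKindTerm a (i + 1) j - C a * secondKindTerm a i j := by
  rcases Nat.lt_or_ge j (i + 1) with hji | hij
  · rw [secondKindTerm_eq_zero_of_lt a hji, secondKindTerm, secondKindTerm, Nat.choose_succ_succ,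
      Nat.choose_eq_zero_of_lt hji, Nat.add_sub_add_right]
    simp only [add_zero, map_mul, map_pow, map_neg, map_natCast]
    ring
  · obtain ⟨k, rfl⟩ := Nat.exists_eq_add_of_le hij
    rw [secondKindTerm, secondKindTerm, secondKindTerm, Nat.choose_succ_succ,
      show i + 1 + k + 1 - (i + 1) = k + 1 by lia, show i + 1 + k - (i + 1) = k by lia,
      show i + 1 + k - i = k + 1 by lia]
    simp only [Nat.cast_add, map_mul, map_add, map_pow, map_neg, map_natCast]
    ring

lemma sum_antidiagonal_secondKindTerm_add_two (n : ℕ) :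
    ∑ p ∈ antidiagonal (n + 2), secondKindTerm a p.1 p.2 =
      X * ∑ p ∈ antidiagonal (n + 1), secondKindTerm a p.1 p.2 -
        C a * ∑ p ∈ antidiagonal n, secondKindTerm a p.1 p.2 := by
  rw [Finset.Nat.antidiagonal_succ_succ', Finset.Nat.antidiagonal_succ]
  simp only [Finset.sum_cons, Finset.sum_map, Function.Embedding.prodMap, Prod.map,
    Function.Embedding.coeFn_mk, Function.Embedding.refl_apply, Nat.succ_eq_add_one,
    secondKindTerm_succ_succ, Finset.sum_sub_distrib, ← Finset.mul_sum, secondKindTerm_zero_left,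
    secondKindTerm_eq_zero_of_lt a (Nat.succ_pos _)]
  ring

lemma dickson_second_kind_eq_sum_antidiagonal (n : ℕ) :
    dickson 2 a n = ∑ p ∈ antidiagonal n, secondKindTerm a p.1 p.2 := by
  induction n using Nat.twoStepInduction with
  | zero => norm_num [secondKindTerm]
  | one => simp [secondKindTerm, Finset.Nat.antidiagonal_succ]
  | more n ih ih_succ =>
    rw [dickson_add_two, ih, ih_succ, sum_antidiagonal_secondKindTerm_add_two]

theorem dickson_second_kind_explicit (n : ℕ) :
    dickson 2 a n =
      ∑ i ∈ Finset.range (n / 2 + 1), C (((n - i).choose i : R) * (-a) ^ i) * X ^ (n - 2 * i) := by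
  have hsubset : Finset.range (n / 2 + 1) ⊆ Finset.range (n + 1) :=
    Finset.range_mono (by lia)
  rw [dickson_second_kind_eq_sum_antidiagonal,
    Finset.Nat.sum_antidiagonal_eq_sum_range_succ (secondKindTerm a), ← Finset.sum_subset hsubset]
  · refine Finset.sum_congr rfl fun i _ => ?_
    rw [secondKindTerm, Nat.sub_sub, two_mul]
  · intro i _ hi
    rw [Finset.mem_range] at hi
    exact secondKindTerm_eq_zero_of_lt a (by lia)

lemma dickson_add_two_eq_second_kind_add (k n : ℕ) :
    dickson k a (n + 2) = dickson 2 a (n + 2) + C (((k : R) - 2) * a) * dickson 2 a n := by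
  induction n using Nat.twoStepInduction with
  | zero =>
    simp only [zero_add, dickson_two, dickson_zero, map_mul, map_sub, map_natCast, map_ofNat,
      Nat.cast_ofNat]
    ring
  | one =>
    simp only [zero_add, dickson_add_two, dickson_one, dickson_zero, map_mul, map_sub, map_natCast,
      map_ofNat, Nat.cast_ofNat]
    ring
  | more n ih ih_succ =>
    rw [dickson_add_two k, ih, ih_succ, dickson_add_two 2 a (n + 2), dickson_add_two 2 a n]
    ring

end CommRing

section Field

variable {K : Type*} [Field K] [CharZero K]

lemma cast_choose_eq_div_mul_choose_succ (m i : ℕ) :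
    (m.choose i : K) = (i + 1) / (m + 1) * ((m + 1).choose (i + 1) : K) := by
  have absorption : ((m : K) + 1) * m.choose i = (m + 1).choose (i + 1) * (i + 1) :=
    mod_cast Nat.add_one_mul_choose_eq m i
  field_simp
  linear_combination absorption

lemma dickson_coeff_succ (a k : K) {n i : ℕ} (hi : i ≤ n) :
    (((n + 2 : ℕ) : K) - (k - 1) * (i + 1 : ℕ)) / (((n + 2 : ℕ) : K) - (i + 1 : ℕ)) *
        ((n + 2 - (i + 1)).choose (i + 1) : K) * (-a) ^ (i + 1) =
      ((n + 2 - (i + 1)).choose (i + 1) : K) * (-a) ^ (i + 1) +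
        (k - 2) * a * (((n - i).choose i : K) * (-a) ^ i) := by
  obtain ⟨m, rfl⟩ := Nat.exists_eq_add_of_le hi
  have hm : ((m : K) + 1) ≠ 0 := Nat.cast_add_one_ne_zero m
  have hden : ((i + m + 2 : ℕ) : K) - (i + 1 : ℕ) = m + 1 := by push_cast; ring
  rw [hden, show i + m + 2 - (i + 1) = m + 1 by lia, Nat.add_sub_cancel_left,
    cast_choose_eq_div_mul_choose_succ m i]
  push_cast
  field_simp
  ring

theorem dickson_third_kind_explicit_general (k : ℕ) (a : K) (n : ℕ) (hn : 1 ≤ n) :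
    dickson k a n
      = ∑ i ∈ Finset.range (n / 2 + 1),
          C (((n : K) - ((k : K) - 1) * (i : K)) / ((n : K) - (i : K)) * ((n - i).choose i : K)
              * (-a) ^ i)
            * X ^ (n - 2 * i) := by
  obtain rfl | ⟨n, rfl⟩ : n = 1 ∨ ∃ m, n = m + 2 := by
    obtain rfl | h := hn.eq_or_lt
    exacts [.inl rfl, .inr (Nat.exists_eq_add_of_le' h)]
  · simp
  have hzero : ((n + 2 : ℕ) : K) ≠ 0 := Nat.cast_ne_zero.2 (by lia)
  rw [dickson_add_two_eq_second_kind_add, dickson_second_kind_explicit a (n + 2),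
    dickson_second_kind_explicit a n, Nat.add_div_right n two_pos, Finset.sum_range_succ',
    Finset.sum_range_succ' _ (n / 2 + 1), add_right_comm, Finset.mul_sum,
    ← Finset.sum_add_distrib]
  congr 1
  · refine Finset.sum_congr rfl fun i hi => ?_
    have hin : i ≤ n := by rw [Finset.mem_range] at hi; lia
    rw [dickson_coeff_succ a k hin, show n + 2 - 2 * (i + 1) = n - 2 * i by lia, ← mul_assoc,
      ← C_mul, ← add_mul, ← C_add]
  · simp only [Nat.cast_zero, mul_zero, sub_zero, div_self hzero, one_mul]

end Field

/-- Explicit formula for the Dickson polynomials of the third kind over `ℂ`: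
`F_n(x,a) = Σ_{i=0}^{⌊n/2⌋} ((n−2i)/(n−i))·C(n−i,i)·(−a)^i·x^{n−2i}` for `n ≥ 1`. -/
theorem dickson_third_kind_explicit (a : ℂ) (n : ℕ) (hn : 1 ≤ n) :
    dickson 3 a n
      = ∑ i ∈ Finset.range (n / 2 + 1),
          C (((n : ℂ) - 2 * (i : ℂ)) / ((n : ℂ) - (i : ℂ)) * ((n - i).choose i : ℂ)
              * (-a) ^ i)
            * X ^ (n - 2 * i) := by
  have hk : ((3 : ℕ) : ℂ) - 1 = 2 := by norm_num
  simpa only [hk] using dickson_third_kind_explicit_general 3 a n hn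
end
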